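/- arXiv:2110.08541 — 2 statements merged into one kernel-verified Lean document; each statement's English description precedes it below -/
import Mathlib

section
/- Let κ ∈ L¹(I) and let r ∈ L^∞(I, SO(3)) with rows r₁, r₂, r₃ be such that r₃ ∈ W^{1,1}(I, ℝ³). Then the following are equivalent: (i) for all t ∈ I, r₁(t) = cos(∫₀ᵗ κ) Π_{r₃|_(0,t)} r₁(0) + sin(∫₀ᵗ κ) Π_{r₃|_(0,t)} r₂(0); (ii) r ∈ W^{1,1}(I, SO(3)) and r₁' · r₂ = κ almost everywhere on I; (iii) r ∈ W^{1,1}(I, SO(3)) and there exist τ, μ ∈ L¹(I) such that, almost everywhere on I, r₁' = κ r₂ + μ r₃, r₂' = −κ r₁ + τ r₃, and r₃' = −μ r₁ − τ r₂. -/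
open MeasureTheory Set Filter Matrix
open scoped RealInnerProductSpace Topology ENNReal NNReal

noncomputable section

/-- Euclidean 3-space. -/
abbrev E3 : Type := EuclideanSpace ℝ (Fin 3)

/-- Cross product on `ℝ³`. -/
def cross3 (v w : E3) : E3 :=
  (WithLp.equiv 2 (Fin 3 → ℝ)).symm
    ![v 1 * w 2 - v 2 * w 1, v 2 * w 0 - v 0 * w 2, v 0 * w 1 - v 1 * w 0]

/-- The `i`-th row of a 3×3 matrix, as a vector in `ℝ³`; for `r ∈ SO(3)` this is `rᵀ eᵢ`. -/
def row3 (M : Matrix (Fin 3) (Fin 3) ℝ) (i : Fin 3) : E3 :=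
  (WithLp.equiv 2 (Fin 3 → ℝ)).symm (M i)

/-- The set of rotation matrices. -/
def SO3 : Set (Matrix (Fin 3) (Fin 3) ℝ) :=
  {M | M * Mᵀ = 1 ∧ M.det = 1}

/-- Lebesgue measure restricted to the unit interval `I = (0,1)`. -/
def muI : Measure ℝ := volume.restrict (Set.Ioo 0 1)

/-- `f` is absolutely continuous on `[a,b]` with (a.e.) derivative `f'` (fundamental theorem of
calculus form); this encodes `f ∈ W^{1,1}((a,b))` via its continuous representative. -/
def FTCOn (f f' : ℝ → E3) (a b : ℝ) : Prop :=
  IntervalIntegrable f' volume a b ∧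
  ∀ t ∈ Set.Icc a b, f t = f a + ∫ s in a..t, f' s

/-- `V` is the parallel transport of `v` along the spherical curve `β` (with derivative `β'`)
on `[a,b]`: the absolutely continuous solution of `V' = -(V·β')β`, `V a = v`, in integral form.
`V t` is the quantity denoted `Π_{β|_(a,t)} v`. -/
def IsParTrans (β β' : ℝ → E3) (a b : ℝ) (v : E3) (V : ℝ → E3) : Prop :=
  V a = v ∧
  IntervalIntegrable (fun s => ⟪V s, β' s⟫ • β s) volume a b ∧
  ∀ t ∈ Set.Icc a b, V t = v - ∫ s in a..t, ⟪V s, β' s⟫ • β s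

/-- Scalar version of `FTCOn` on `[0,1]`. -/
def SAC (f f' : ℝ → ℝ) : Prop :=
  IntervalIntegrable f' volume 0 1 ∧
  ∀ t ∈ Set.Icc (0:ℝ) 1, f t = f 0 + ∫ s in (0:ℝ)..t, f' s

theorem ae_muI_iff {P : ℝ → Prop} :
    (∀ᵐ x ∂muI, P x) ↔ ∀ᵐ x, x ∈ Icc (0:ℝ) 1 → P x := by
  unfold muI
  rw [restrict_Ioo_eq_restrict_Icc, ae_restrict_iff' measurableSet_Icc]

theorem ii_iff_muI {E : Type*} [NormedAddCommGroup E] {f : ℝ → E} :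
    IntervalIntegrable f volume 0 1 ↔ Integrable f muI := by
  rw [intervalIntegrable_iff_integrableOn_Ioo_of_le zero_le_one]
  rfl

theorem ii_congr {E : Type*} [NormedAddCommGroup E] {f g : ℝ → E}
    (hf : IntervalIntegrable f volume 0 1) (h : f =ᵐ[muI] g) :
    IntervalIntegrable g volume 0 1 := by
  rw [ii_iff_muI] at *
  exact hf.congr h

theorem int_congr {E : Type*} [NormedAddCommGroup E] [NormedSpace ℝ E] {f g : ℝ → E}
    (h : ∀ᵐ x ∂muI, f x = g x) {t : ℝ} (ht : t ∈ Icc (0:ℝ) 1) :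
    ∫ s in (0:ℝ)..t, f s = ∫ s in (0:ℝ)..t, g s := by
  rw [ae_muI_iff] at h
  apply intervalIntegral.integral_congr_ae
  filter_upwards [h] with x hx hx2
  rw [uIoc_of_le ht.1] at hx2
  exact hx ⟨hx2.1.le, hx2.2.trans ht.2⟩

theorem ii_sub {E : Type*} [NormedAddCommGroup E] {f : ℝ → E}
    (hf : IntervalIntegrable f volume 0 1) {t : ℝ} (ht : t ∈ Icc (0:ℝ) 1) :
    IntervalIntegrable f volume 0 t := by
  apply hf.mono_set
  rw [uIcc_of_le ht.1, uIcc_of_le zero_le_one]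
  exact Icc_subset_Icc_right ht.2

theorem SAC.congr {f f' g g' : ℝ → ℝ} (h : SAC f f') (hfg : ∀ t ∈ Icc (0:ℝ) 1, g t = f t)
    (h' : ∀ᵐ t ∂muI, g' t = f' t) : SAC g g' := by
  refine ⟨ii_congr h.1 (by filter_upwards [h'] with t ht using ht.symm), fun t ht => ?_⟩
  rw [hfg t ht, hfg 0 (by simp), h.2 t ht, int_congr h' ht]

theorem SAC.rep {f f' : ℝ → ℝ} (h : SAC f f') : ∃ F : ℝ → ℝ,
    AbsolutelyContinuousOnInterval F 0 1 ∧ (∀ᵐ x ∂muI, HasDerivAt F (f' x) x) ∧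
    ∀ t ∈ Icc (0:ℝ) 1, f t = F t := by
  refine ⟨fun t => f 0 + ∫ s in (0:ℝ)..t, f' s, ?_, ?_, h.2⟩
  · have h1 := h.1.absolutelyContinuousOnInterval_intervalIntegral (c := 0) (by simp)
    have h2 : AbsolutelyContinuousOnInterval (fun _ : ℝ => f 0) 0 1 :=
      (LipschitzOnWith.absolutelyContinuousOnInterval (K := 0)
        (LipschitzWith.const (f 0)).lipschitzOnWith)
    exact h2.add h1
  · rw [ae_muI_iff]
    filter_upwards [h.1.ae_hasDerivAt_integral] with x hx hx2
    rw [uIcc_of_le zero_le_one] at hx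
    exact (hx hx2 0 (by simp)).const_add (f 0)

theorem SAC.of_deriv {F f' : ℝ → ℝ} (h : AbsolutelyContinuousOnInterval F 0 1)
    (hd : ∀ᵐ x ∂muI, HasDerivAt F (f' x) x) : SAC F f' := by
  have hd' : ∀ᵐ x ∂muI, deriv F x = f' x := by
    filter_upwards [hd] with x hx using hx.deriv
  refine ⟨ii_congr h.intervalIntegrable_deriv hd', fun t ht => ?_⟩
  rw [← int_congr hd' ht, (h.mono (c := 0) (d := t) ?_).integral_deriv_eq_sub]
  · ring
  · rw [uIcc_of_le ht.1, uIcc_of_le zero_le_one]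
    exact Icc_subset_Icc_right ht.2

theorem ae_mem : ∀ᵐ x ∂muI, x ∈ Icc (0:ℝ) 1 := by
  rw [ae_muI_iff]; filter_upwards with x hx using hx

theorem SAC.mul {f f' g g' : ℝ → ℝ} (hf : SAC f f') (hg : SAC g g') :
    SAC (fun t => f t * g t) (fun t => f' t * g t + f t * g' t) := by
  obtain ⟨F, hF, hFd, hFe⟩ := hf.rep
  obtain ⟨G, hG, hGd, hGe⟩ := hg.rep
  refine (SAC.of_deriv (F := fun t => F t * G t) (f' := fun t => f' t * G t + F t * g' t)
    (hF.fun_mul hG) ?_).congr ?_ ?_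
  · filter_upwards [hFd, hGd] with x h1 h2 using h1.mul h2
  · intro t ht; simp only [hFe t ht, hGe t ht]
  · filter_upwards [ae_mem] with t ht; simp only [hFe t ht, hGe t ht]

theorem SAC.add {f f' g g' : ℝ → ℝ} (hf : SAC f f') (hg : SAC g g') :
    SAC (fun t => f t + g t) (fun t => f' t + g' t) := by
  refine ⟨hf.1.add hg.1, fun t ht => ?_⟩
  rw [intervalIntegral.integral_add (ii_sub hf.1 ht) (ii_sub hg.1 ht)]
  beta_reduce
  rw [hf.2 t ht, hg.2 t ht]
  ring

theorem SAC.sub {f f' g g' : ℝ → ℝ} (hf : SAC f f') (hg : SAC g g') :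
    SAC (fun t => f t - g t) (fun t => f' t - g' t) := by
  refine ⟨hf.1.sub hg.1, fun t ht => ?_⟩
  rw [intervalIntegral.integral_sub (ii_sub hf.1 ht) (ii_sub hg.1 ht)]
  beta_reduce
  rw [hf.2 t ht, hg.2 t ht]
  ring

theorem SAC.neg {f f' : ℝ → ℝ} (hf : SAC f f') :
    SAC (fun t => - f t) (fun t => - f' t) := by
  refine ⟨hf.1.neg, fun t ht => ?_⟩
  rw [intervalIntegral.integral_neg]
  beta_reduce
  rw [hf.2 t ht]
  ring

theorem SAC.const (c : ℝ) : SAC (fun _ => c) (fun _ => 0) :=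
  ⟨intervalIntegrable_const, fun t ht => by simp⟩

theorem SAC.continuousOn {f f' : ℝ → ℝ} (h : SAC f f') : ContinuousOn f (Icc 0 1) := by
  obtain ⟨F, hF, hFd, hFe⟩ := h.rep
  have := hF.continuousOn
  rw [uIcc_of_le zero_le_one] at this
  exact this.congr hFe

theorem SAC.unique {f f' g g' : ℝ → ℝ} (hf : SAC f f') (hg : SAC g g')
    (h : ∀ t ∈ Icc (0:ℝ) 1, f t = g t) : ∀ᵐ t ∂muI, f' t = g' t := by
  obtain ⟨F, hF, hFd, hFe⟩ := hf.rep
  obtain ⟨G, hG, hGd, hGe⟩ := hg.rep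
  have hIoo : ∀ᵐ x ∂muI, x ∈ Ioo (0:ℝ) 1 := ae_restrict_mem measurableSet_Ioo
  filter_upwards [hFd, hGd, hIoo] with x h1 h2 hx
  apply h1.unique
  apply h2.congr_of_eventuallyEq
  filter_upwards [Icc_mem_nhds hx.1 hx.2] with t ht
  rw [← hFe t ht, ← hGe t ht, h t ht]

theorem SAC.eq_const {f f' : ℝ → ℝ} (hf : SAC f f') (h : ∀ᵐ t ∂muI, f' t = 0) :
    ∀ t ∈ Icc (0:ℝ) 1, f t = f 0 := by
  intro t ht
  rw [hf.2 t ht, int_congr h ht]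
  simp

theorem acoi_comp {f : ℝ → ℝ} {φ : ℝ → ℝ} (hφ : ∀ x y, dist (φ x) (φ y) ≤ dist x y)
    (h : AbsolutelyContinuousOnInterval f 0 1) :
    AbsolutelyContinuousOnInterval (fun t => φ (f t)) 0 1 := by
  unfold AbsolutelyContinuousOnInterval at *
  refine squeeze_zero (fun E => Finset.sum_nonneg fun _ _ => dist_nonneg) (fun E => ?_) h
  exact Finset.sum_le_sum fun i _ => hφ _ _

theorem SAC.comp {f f' : ℝ → ℝ} {φ φ' : ℝ → ℝ} (hφ : ∀ x y, dist (φ x) (φ y) ≤ dist x y)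
    (hd : ∀ x, HasDerivAt φ (φ' x) x) (hf : SAC f f') :
    SAC (fun t => φ (f t)) (fun t => φ' (f t) * f' t) := by
  obtain ⟨F, hF, hFd, hFe⟩ := hf.rep
  refine (SAC.of_deriv (F := fun t => φ (F t)) (f' := fun t => φ' (F t) * f' t)
    (acoi_comp hφ hF) ?_).congr ?_ ?_
  · filter_upwards [hFd] with x h1 using (hd _).comp x h1
  · intro t ht; simp only [hFe t ht]
  · filter_upwards [ae_mem] with t ht; simp only [hFe t ht]

theorem lip_of_deriv {φ φ' : ℝ → ℝ} (hd : ∀ x, HasDerivAt φ (φ' x) x) (hb : ∀ x, |φ' x| ≤ 1)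
    (x y : ℝ) : dist (φ x) (φ y) ≤ dist x y := by
  have := lipschitzWith_of_nnnorm_deriv_le (f := φ) (C := 1)
    (fun x => (hd x).differentiableAt) (fun x => by
      rw [(hd x).deriv]; exact_mod_cast hb x)
  simpa using this.dist_le_mul x y

theorem SAC.cos {f f' : ℝ → ℝ} (hf : SAC f f') :
    SAC (fun t => Real.cos (f t)) (fun t => -Real.sin (f t) * f' t) :=
  hf.comp (φ' := fun x => -Real.sin x)
    (lip_of_deriv Real.hasDerivAt_cos fun x => by
      rw [abs_neg]; exact Real.abs_sin_le_one x) Real.hasDerivAt_cos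

theorem SAC.sin {f f' : ℝ → ℝ} (hf : SAC f f') :
    SAC (fun t => Real.sin (f t)) (fun t => Real.cos (f t) * f' t) :=
  hf.comp (φ' := fun x => Real.cos x)
    (lip_of_deriv Real.hasDerivAt_sin Real.abs_cos_le_one) Real.hasDerivAt_sin

/-! Vector-valued versions. -/

theorem ii_coord {f : ℝ → E3} :
    IntervalIntegrable f volume 0 1 ↔ ∀ i, IntervalIntegrable (fun t => f t i) volume 0 1 := by
  simp only [ii_iff_muI]
  constructor
  · intro h i
    exact (EuclideanSpace.proj (𝕜 := ℝ) i).integrable_comp h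
  · intro h
    have : Integrable (fun t => fun i => f t i) muI := Integrable.of_eval h
    exact (EuclideanSpace.equiv (Fin 3) ℝ).symm.toContinuousLinearMap.integrable_comp this

theorem int_coord {f : ℝ → E3} (hf : IntervalIntegrable f volume 0 1) {t : ℝ}
    (ht : t ∈ Icc (0:ℝ) 1) (i : Fin 3) :
    (∫ s in (0:ℝ)..t, f s) i = ∫ s in (0:ℝ)..t, f s i := by
  exact ((EuclideanSpace.proj (𝕜 := ℝ) i).intervalIntegral_comp_comm (ii_sub hf ht)).symm

theorem ftc_coord {f f' : ℝ → E3} :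
    FTCOn f f' 0 1 ↔ ∀ i, SAC (fun t => f t i) (fun t => f' t i) := by
  constructor
  · intro h i
    refine ⟨ii_coord.1 h.1 i, fun t ht => ?_⟩
    rw [← int_coord h.1 ht]
    have := congrArg (fun v : E3 => v i) (h.2 t ht)
    simpa using this
  · intro h
    have hi := ii_coord.2 fun i => (h i).1
    refine ⟨hi, fun t ht => ?_⟩
    ext i
    have := (h i).2 t ht
    rw [← int_coord hi ht] at this
    simpa using this

theorem inner3 (x y : E3) : ⟪x, y⟫ = x 0 * y 0 + x 1 * y 1 + x 2 * y 2 := by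
  simp [PiLp.inner_apply, Fin.sum_univ_three, mul_comm]

theorem cross3_0 (x y : E3) : cross3 x y 0 = x 1 * y 2 - x 2 * y 1 := rfl
theorem cross3_1 (x y : E3) : cross3 x y 1 = x 2 * y 0 - x 0 * y 2 := rfl
theorem cross3_2 (x y : E3) : cross3 x y 2 = x 0 * y 1 - x 1 * y 0 := rfl

theorem FTCOn.congr {f f' g g' : ℝ → E3} (h : FTCOn f f' 0 1)
    (hfg : ∀ t ∈ Icc (0:ℝ) 1, g t = f t)
    (h' : ∀ᵐ t ∂muI, g' t = f' t) : FTCOn g g' 0 1 := by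
  refine ⟨ii_congr h.1 (by filter_upwards [h'] with t ht using ht.symm), fun t ht => ?_⟩
  rw [hfg t ht, hfg 0 (by simp), h.2 t ht, int_congr h' ht]

theorem FTCOn.add {f f' g g' : ℝ → E3} (hf : FTCOn f f' 0 1) (hg : FTCOn g g' 0 1) :
    FTCOn (fun t => f t + g t) (fun t => f' t + g' t) 0 1 := by
  rw [ftc_coord] at *
  exact fun i => (hf i).add (hg i)

theorem FTCOn.sub {f f' g g' : ℝ → E3} (hf : FTCOn f f' 0 1) (hg : FTCOn g g' 0 1) :
    FTCOn (fun t => f t - g t) (fun t => f' t - g' t) 0 1 := by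
  rw [ftc_coord] at *
  exact fun i => (hf i).sub (hg i)

theorem FTCOn.smul {f f' : ℝ → E3} {φ φ' : ℝ → ℝ} (hφ : SAC φ φ') (hf : FTCOn f f' 0 1) :
    FTCOn (fun t => φ t • f t) (fun t => φ' t • f t + φ t • f' t) 0 1 := by
  rw [ftc_coord] at *
  exact fun i => hφ.mul (hf i)

theorem FTCOn.inner {f f' g g' : ℝ → E3} (hf : FTCOn f f' 0 1) (hg : FTCOn g g' 0 1) :
    SAC (fun t => ⟪f t, g t⟫) (fun t => ⟪f' t, g t⟫ + ⟪f t, g' t⟫) := by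
  rw [ftc_coord] at *
  refine ((((hf 0).mul (hg 0)).add ((hf 1).mul (hg 1))).add ((hf 2).mul (hg 2))).congr ?_ ?_
  · intro t _; simp only [inner3]
  · filter_upwards with t; simp only [inner3]; ring

theorem FTCOn.inner_integrable {f' g g' : ℝ → E3} (hf : IntervalIntegrable f' volume 0 1)
    (hg : FTCOn g g' 0 1) : IntervalIntegrable (fun t => ⟪f' t, g t⟫) volume 0 1 := by
  rw [ftc_coord] at hg
  rw [ii_coord] at hf
  have hc : ∀ i, ContinuousOn (fun t => g t i) (uIcc 0 1) := fun i => by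
    rw [uIcc_of_le zero_le_one]; exact (hg i).continuousOn
  simp only [inner3]
  exact (((hf 0).mul_continuousOn (hc 0)).add ((hf 1).mul_continuousOn (hc 1))).add
    ((hf 2).mul_continuousOn (hc 2))

theorem FTCOn.cross {f f' g g' : ℝ → E3} (hf : FTCOn f f' 0 1) (hg : FTCOn g g' 0 1) :
    FTCOn (fun t => cross3 (f t) (g t))
      (fun t => cross3 (f' t) (g t) + cross3 (f t) (g' t)) 0 1 := by
  rw [ftc_coord] at *
  intro i
  fin_cases i
  · refine (((hf 1).mul (hg 2)).sub ((hf 2).mul (hg 1))).congr (fun t _ => rfl) ?_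
    filter_upwards with t
    simp [cross3_0]; ring
  · refine (((hf 2).mul (hg 0)).sub ((hf 0).mul (hg 2))).congr (fun t _ => rfl) ?_
    filter_upwards with t
    simp [cross3_1]; ring
  · refine (((hf 0).mul (hg 1)).sub ((hf 1).mul (hg 0))).congr (fun t _ => rfl) ?_
    filter_upwards with t
    simp [cross3_2]; ring

theorem FTCOn.unique {f f' g g' : ℝ → E3} (hf : FTCOn f f' 0 1) (hg : FTCOn g g' 0 1)
    (h : ∀ t ∈ Icc (0:ℝ) 1, f t = g t) : ∀ᵐ t ∂muI, f' t = g' t := by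
  rw [ftc_coord] at *
  have h1 := fun i => (hf i).unique (hg i) (fun t ht => by rw [h t ht])
  rw [← ae_all_iff] at h1
  filter_upwards [h1] with t ht
  ext i; exact ht i

theorem IsParTrans.ftc {β β' : ℝ → E3} {v : E3} {V : ℝ → E3} (h : IsParTrans β β' 0 1 v V) :
    FTCOn V (fun s => -(⟪V s, β' s⟫ • β s)) 0 1 := by
  refine ⟨h.2.1.neg, fun t ht => ?_⟩
  rw [intervalIntegral.integral_neg, h.1, h.2.2 t ht, sub_eq_add_neg]

theorem isParTrans_of {β β' : ℝ → E3} {v : E3} {V : ℝ → E3} (h0 : V 0 = v)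
    (h : FTCOn V (fun s => -(⟪V s, β' s⟫ • β s)) 0 1) : IsParTrans β β' 0 1 v V := by
  have h1 : (-fun s => -(⟪V s, β' s⟫ • β s)) = fun s => ⟪V s, β' s⟫ • β s := by
    funext s; simp
  refine ⟨h0, h1 ▸ h.1.neg, fun t ht => ?_⟩
  have := h.2 t ht
  rw [intervalIntegral.integral_neg, h0] at this
  rw [this, sub_eq_add_neg]

/-! Algebra of rotation matrices. -/

theorem SO3_inner {M : Matrix (Fin 3) (Fin 3) ℝ} (h : M ∈ SO3) (i j : Fin 3) :
    ⟪row3 M i, row3 M j⟫ = if i = j then 1 else 0 := by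
  have := congrFun (congrFun h.1 i) j
  rw [Matrix.mul_apply, Matrix.one_apply] at this
  rw [inner3, ← this, Fin.sum_univ_three]
  rfl

theorem row3_apply (M : Matrix (Fin 3) (Fin 3) ℝ) (i j : Fin 3) : row3 M i j = M i j := rfl

theorem SO3_expand {M : Matrix (Fin 3) (Fin 3) ℝ} (h : M ∈ SO3) (x : E3) :
    x = ⟪x, row3 M 0⟫ • row3 M 0 + ⟪x, row3 M 1⟫ • row3 M 1 + ⟪x, row3 M 2⟫ • row3 M 2 := by
  have h2 : Mᵀ * M = 1 := mul_eq_one_comm.1 h.1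
  have hx : (fun i => x i) = (fun i => x i) ᵥ* (Mᵀ * M) := by rw [h2]; simp
  ext i
  have := congrFun hx i
  rw [← Matrix.vecMul_vecMul] at this
  simp only [Matrix.vecMul, dotProduct, Fin.sum_univ_three, Matrix.transpose_apply] at this
  rw [this]
  simp only [inner3, row3_apply, PiLp.add_apply, PiLp.smul_apply, smul_eq_mul]

theorem lagrange3 (x y z w : E3) :
    ⟪cross3 x y, cross3 z w⟫ = ⟪x, z⟫ * ⟪y, w⟫ - ⟪x, w⟫ * ⟪y, z⟫ := by
  simp only [inner3, cross3_0, cross3_1, cross3_2]; ring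

theorem gram3 (x y z : E3) :
    ⟪cross3 x y, z⟫ ^ 2 = ⟪x, x⟫ * (⟪y, y⟫ * ⟪z, z⟫ - ⟪y, z⟫ ^ 2)
      - ⟪x, y⟫ * (⟪x, y⟫ * ⟪z, z⟫ - ⟪y, z⟫ * ⟪x, z⟫)
      + ⟪x, z⟫ * (⟪x, y⟫ * ⟪y, z⟫ - ⟪y, y⟫ * ⟪x, z⟫) := by
  simp only [inner3, cross3_0, cross3_1, cross3_2]; ring

theorem cross_cross3 (x y : E3) : cross3 x (cross3 x y) = ⟪x, y⟫ • x - ⟪x, x⟫ • y := by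
  ext i
  rw [inner3, inner3]
  fin_cases i <;> simp [cross3_0, cross3_1, cross3_2] <;> ring

theorem cross_add3 (x y z : E3) (a b : ℝ) :
    cross3 x (a • y + b • z) = a • cross3 x y + b • cross3 x z := by
  ext i
  fin_cases i <;> simp [cross3_0, cross3_1, cross3_2] <;> ring

theorem cross_eq3 {x y z : E3} (hx : ⟪x, x⟫ = 1) (hy : ⟪y, y⟫ = 1) (hz : ⟪z, z⟫ = 1)
    (hxy : ⟪x, y⟫ = 0) (hp : ⟪cross3 x y, z⟫ = 1) : cross3 x y = z := by
  rw [← sub_eq_zero, ← inner_self_eq_zero (𝕜 := ℝ)]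
  rw [inner_sub_sub_self, lagrange3, real_inner_comm _ z, hp, hz, hx, hy, hxy]
  norm_num

theorem SO3_det {M : Matrix (Fin 3) (Fin 3) ℝ} (h : M ∈ SO3) :
    ⟪cross3 (row3 M 2) (row3 M 0), row3 M 1⟫ = 1 := by
  have := h.2
  rw [Matrix.det_fin_three] at this
  rw [← this]
  simp only [inner3, cross3_0, cross3_1, cross3_2, row3_apply]; ring

theorem SO3_cross {M : Matrix (Fin 3) (Fin 3) ℝ} (h : M ∈ SO3) :
    cross3 (row3 M 2) (row3 M 0) = row3 M 1 :=
  cross_eq3 (SO3_inner h 2 2) (SO3_inner h 0 0) (SO3_inner h 1 1)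
    (SO3_inner h 2 0) (SO3_det h)

theorem theta_SAC {κ : ℝ → ℝ} (hκ : IntegrableOn κ (Set.Ioo 0 1)) :
    SAC (fun t => ∫ s in (0:ℝ)..t, κ s) κ :=
  ⟨ii_iff_muI.2 hκ, fun t _ => by simp⟩

theorem ii_to_iii (κ : ℝ → ℝ)
    (r : ℝ → Matrix (Fin 3) (Fin 3) ℝ)
    (hSO : ∀ t ∈ Set.Icc (0:ℝ) 1, r t ∈ SO3) :
    (∃ ρ' : Fin 3 → ℝ → E3,
        (∀ i : Fin 3, FTCOn (fun t => row3 (r t) i) (ρ' i) 0 1) ∧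
        ∀ᵐ t ∂muI, ⟪ρ' 0 t, row3 (r t) 1⟫ = κ t) →
      (∃ (ρ' : Fin 3 → ℝ → E3) (τ μ : ℝ → ℝ),
        (∀ i : Fin 3, FTCOn (fun t => row3 (r t) i) (ρ' i) 0 1) ∧
        IntegrableOn τ (Set.Ioo 0 1) ∧ IntegrableOn μ (Set.Ioo 0 1) ∧
        (∀ᵐ t ∂muI,
          ρ' 0 t = κ t • row3 (r t) 1 + μ t • row3 (r t) 2 ∧
          ρ' 1 t = -κ t • row3 (r t) 0 + τ t • row3 (r t) 2 ∧
          ρ' 2 t = -μ t • row3 (r t) 0 - τ t • row3 (r t) 1)) := by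
  rintro ⟨ρ', hF, hae⟩
  refine ⟨ρ', fun t => ⟪ρ' 1 t, row3 (r t) 2⟫, fun t => ⟪ρ' 0 t, row3 (r t) 2⟫, hF,
    ii_iff_muI.1 (FTCOn.inner_integrable (hF 1).1 (hF 2)),
    ii_iff_muI.1 (FTCOn.inner_integrable (hF 0).1 (hF 2)), ?_⟩
  have hs : ∀ i j : Fin 3, ∀ᵐ t ∂muI,
      ⟪ρ' i t, row3 (r t) j⟫ + ⟪row3 (r t) i, ρ' j t⟫ = 0 := fun i j =>
    ((hF i).inner (hF j)).unique (SAC.const (if i = j then 1 else 0))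
      fun t ht => SO3_inner (hSO t ht) i j
  have hs2 : ∀ᵐ t ∂muI, ∀ i j : Fin 3,
      ⟪ρ' i t, row3 (r t) j⟫ + ⟪ρ' j t, row3 (r t) i⟫ = 0 := by
    rw [ae_all_iff]; intro i
    rw [ae_all_iff]; intro j
    filter_upwards [hs i j] with t ht
    rw [real_inner_comm (row3 (r t) i)]; exact ht
  filter_upwards [hae, ae_mem, hs2] with t hk htI h
  have e00 : ⟪ρ' 0 t, row3 (r t) 0⟫ = 0 := by linarith [h 0 0]
  have e11 : ⟪ρ' 1 t, row3 (r t) 1⟫ = 0 := by linarith [h 1 1]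
  have e22 : ⟪ρ' 2 t, row3 (r t) 2⟫ = 0 := by linarith [h 2 2]
  have e10 : ⟪ρ' 1 t, row3 (r t) 0⟫ = -κ t := by linarith [h 0 1]
  have e20 : ⟪ρ' 2 t, row3 (r t) 0⟫ = -⟪ρ' 0 t, row3 (r t) 2⟫ := by linarith [h 0 2]
  have e21 : ⟪ρ' 2 t, row3 (r t) 1⟫ = -⟪ρ' 1 t, row3 (r t) 2⟫ := by linarith [h 1 2]
  have x0 := SO3_expand (hSO t htI) (ρ' 0 t)
  have x1 := SO3_expand (hSO t htI) (ρ' 1 t)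
  have x2 := SO3_expand (hSO t htI) (ρ' 2 t)
  rw [e00, hk] at x0
  rw [e10, e11] at x1
  rw [e20, e21, e22] at x2
  refine ⟨x0.trans ?_, x1.trans ?_, x2.trans ?_⟩ <;> module

theorem iii_to_i (κ : ℝ → ℝ) (hκ : IntegrableOn κ (Set.Ioo 0 1))
    (r : ℝ → Matrix (Fin 3) (Fin 3) ℝ)
    (hSO : ∀ t ∈ Set.Icc (0:ℝ) 1, r t ∈ SO3)
    (b' : ℝ → E3) (hb : FTCOn (fun t => row3 (r t) 2) b' 0 1) :
      (∃ (ρ' : Fin 3 → ℝ → E3) (τ μ : ℝ → ℝ),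
        (∀ i : Fin 3, FTCOn (fun t => row3 (r t) i) (ρ' i) 0 1) ∧
        IntegrableOn τ (Set.Ioo 0 1) ∧ IntegrableOn μ (Set.Ioo 0 1) ∧
        (∀ᵐ t ∂muI,
          ρ' 0 t = κ t • row3 (r t) 1 + μ t • row3 (r t) 2 ∧
          ρ' 1 t = -κ t • row3 (r t) 0 + τ t • row3 (r t) 2 ∧
          ρ' 2 t = -μ t • row3 (r t) 0 - τ t • row3 (r t) 1)) →
    (∃ V₁ V₂ : ℝ → E3,
        IsParTrans (fun t => row3 (r t) 2) b' 0 1 (row3 (r 0) 0) V₁ ∧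
        IsParTrans (fun t => row3 (r t) 2) b' 0 1 (row3 (r 0) 1) V₂ ∧
        ∀ t ∈ Set.Icc (0:ℝ) 1,
          row3 (r t) 0 = Real.cos (∫ s in (0:ℝ)..t, κ s) • V₁ t
            + Real.sin (∫ s in (0:ℝ)..t, κ s) • V₂ t) := by
  rintro ⟨ρ', τ, μ, hF, -, -, hae⟩
  have hθ := theta_SAC hκ
  have hθ0 : ∫ s in (0:ℝ)..0, κ s = 0 := by simp
  generalize hθe : (fun t => ∫ s in (0:ℝ)..t, κ s) = θ at hθ
  have hθe' : ∀ t, ∫ s in (0:ℝ)..t, κ s = θ t := fun t => congrFun hθe t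
  simp only [hθe'] at hθ0 ⊢
  have hu := hb.unique (hF 2) fun _ _ => rfl
  refine ⟨fun t => Real.cos (θ t) • row3 (r t) 0 - Real.sin (θ t) • row3 (r t) 1,
    fun t => Real.sin (θ t) • row3 (r t) 0 + Real.cos (θ t) • row3 (r t) 1, ?_, ?_, ?_⟩
  · refine isParTrans_of (by simp [hθ0])
      ((FTCOn.sub (FTCOn.smul hθ.cos (hF 0)) (FTCOn.smul hθ.sin (hF 1))).congr
        (fun _ _ => rfl) ?_)
    filter_upwards [hae, ae_mem, hu] with t ⟨h0, h1, h2⟩ htI hb2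
    have hi := SO3_inner (hSO t htI)
    have : ⟪Real.cos (θ t) • row3 (r t) 0 - Real.sin (θ t) • row3 (r t) 1, b' t⟫
        = - Real.cos (θ t) * μ t + Real.sin (θ t) * τ t := by
      rw [hb2, h2]
      simp only [inner_sub_left, inner_sub_right, inner_smul_left, inner_smul_right, hi]
      simp; ring
    rw [this, h0, h1]
    module
  · refine isParTrans_of (by simp [hθ0])
      ((FTCOn.add (FTCOn.smul hθ.sin (hF 0)) (FTCOn.smul hθ.cos (hF 1))).congr
        (fun _ _ => rfl) ?_)
    filter_upwards [hae, ae_mem, hu] with t ⟨h0, h1, h2⟩ htI hb2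
    have hi := SO3_inner (hSO t htI)
    have : ⟪Real.sin (θ t) • row3 (r t) 0 + Real.cos (θ t) • row3 (r t) 1, b' t⟫
        = - Real.sin (θ t) * μ t - Real.cos (θ t) * τ t := by
      rw [hb2, h2]
      simp only [inner_add_left, inner_sub_right, inner_smul_left, inner_smul_right, hi]
      simp; ring
    rw [this, h0, h1]
    module
  · intro t _
    have h := Real.sin_sq_add_cos_sq (θ t)
    have : row3 (r t) 0 = (Real.sin (θ t) ^ 2 + Real.cos (θ t) ^ 2) • row3 (r t) 0 := by
      rw [h, one_smul]
    refine this.trans ?_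
    module

theorem par_perp {β β' : ℝ → E3} {V : ℝ → E3} {v : E3} (hβ : FTCOn β β' 0 1)
    (h1 : ∀ t ∈ Icc (0:ℝ) 1, ⟪β t, β t⟫ = 1) (hV : IsParTrans β β' 0 1 v V)
    (h0 : ⟪v, β 0⟫ = 0) : ∀ t ∈ Icc (0:ℝ) 1, ⟪V t, β t⟫ = 0 := by
  intro t ht
  rw [(hV.ftc.inner hβ).eq_const ?_ t ht, hV.1, h0]
  filter_upwards [ae_mem] with s hs
  rw [inner_neg_left, inner_smul_left, h1 s hs]
  simp

theorem par_inner {β β' : ℝ → E3} {V W : ℝ → E3} {v w : E3}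
    (hV : IsParTrans β β' 0 1 v V) (hW : IsParTrans β β' 0 1 w W)
    (hv : ∀ t ∈ Icc (0:ℝ) 1, ⟪V t, β t⟫ = 0) (hw : ∀ t ∈ Icc (0:ℝ) 1, ⟪W t, β t⟫ = 0) :
    ∀ t ∈ Icc (0:ℝ) 1, ⟪V t, W t⟫ = ⟪v, w⟫ := by
  intro t ht
  rw [(hV.ftc.inner hW.ftc).eq_const ?_ t ht, hV.1, hW.1]
  filter_upwards [ae_mem] with s hs
  rw [inner_neg_left, inner_smul_left, inner_neg_right, inner_smul_right, hv s hs,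
    real_inner_comm (W s) (β s), hw s hs]
  simp

theorem i_to_ii (κ : ℝ → ℝ) (hκ : IntegrableOn κ (Set.Ioo 0 1))
    (r : ℝ → Matrix (Fin 3) (Fin 3) ℝ)
    (hSO : ∀ t ∈ Set.Icc (0:ℝ) 1, r t ∈ SO3)
    (b' : ℝ → E3) (hb : FTCOn (fun t => row3 (r t) 2) b' 0 1) :
    (∃ V₁ V₂ : ℝ → E3,
        IsParTrans (fun t => row3 (r t) 2) b' 0 1 (row3 (r 0) 0) V₁ ∧
        IsParTrans (fun t => row3 (r t) 2) b' 0 1 (row3 (r 0) 1) V₂ ∧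
        ∀ t ∈ Set.Icc (0:ℝ) 1,
          row3 (r t) 0 = Real.cos (∫ s in (0:ℝ)..t, κ s) • V₁ t
            + Real.sin (∫ s in (0:ℝ)..t, κ s) • V₂ t) →
      (∃ ρ' : Fin 3 → ℝ → E3,
        (∀ i : Fin 3, FTCOn (fun t => row3 (r t) i) (ρ' i) 0 1) ∧
        ∀ᵐ t ∂muI, ⟪ρ' 0 t, row3 (r t) 1⟫ = κ t) := by
  rintro ⟨V, W, hV, hW, hr⟩
  have hθ := theta_SAC hκ
  generalize hθe : (fun t => ∫ s in (0:ℝ)..t, κ s) = θ at hθ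
  have hθe' : ∀ t, ∫ s in (0:ℝ)..t, κ s = θ t := fun t => congrFun hθe t
  simp only [hθe'] at hr
  have h0I : (0:ℝ) ∈ Icc (0:ℝ) 1 := by simp
  have hi0 := SO3_inner (hSO 0 h0I)
  have hcc : ∀ t ∈ Icc (0:ℝ) 1, ⟪row3 (r t) 2, row3 (r t) 2⟫ = 1 :=
    fun t ht => SO3_inner (hSO t ht) 2 2
  have hVc := par_perp hb hcc hV (hi0 0 2)
  have hWc := par_perp hb hcc hW (hi0 1 2)
  have hVV : ∀ t ∈ Icc (0:ℝ) 1, ⟪V t, V t⟫ = 1 := fun t ht =>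
    (par_inner hV hV hVc hVc t ht).trans (hi0 0 0)
  have hWW : ∀ t ∈ Icc (0:ℝ) 1, ⟪W t, W t⟫ = 1 := fun t ht =>
    (par_inner hW hW hWc hWc t ht).trans (hi0 1 1)
  have hVW : ∀ t ∈ Icc (0:ℝ) 1, ⟪V t, W t⟫ = 0 := fun t ht =>
    (par_inner hV hW hVc hWc t ht).trans (hi0 0 1)
  have hcV : ∀ t ∈ Icc (0:ℝ) 1, ⟪row3 (r t) 2, V t⟫ = 0 := fun t ht => by
    rw [real_inner_comm]; exact hVc t ht
  have hcW : ∀ t ∈ Icc (0:ℝ) 1, ⟪row3 (r t) 2, W t⟫ = 0 := fun t ht => by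
    rw [real_inner_comm]; exact hWc t ht
  -- orientation
  have hp : ∀ t ∈ Icc (0:ℝ) 1, ⟪cross3 (row3 (r t) 2) (V t), W t⟫ = 1 := by
    have hc := ((hb.cross hV.ftc).inner hW.ftc).continuousOn
    refine isPreconnected_Icc.eq_of_sq_eq (f := fun t => ⟪cross3 (row3 (r t) 2) (V t), W t⟫)
      (g := fun _ => (1:ℝ)) hc continuousOn_const ?_ (fun _ => one_ne_zero) h0I ?_
    · intro t ht
      simp only [Pi.pow_apply]
      rw [gram3, hcc t ht, hVV t ht, hWW t ht, hVW t ht, hcV t ht, hcW t ht]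
      norm_num
    · rw [hV.1, hW.1]; exact SO3_det (hSO 0 h0I)
  have hcrV : ∀ t ∈ Icc (0:ℝ) 1, cross3 (row3 (r t) 2) (V t) = W t := fun t ht =>
    cross_eq3 (hcc t ht) (hVV t ht) (hWW t ht) (hcV t ht) (hp t ht)
  have hcrW : ∀ t ∈ Icc (0:ℝ) 1, cross3 (row3 (r t) 2) (W t) = - V t := fun t ht => by
    rw [← hcrV t ht, cross_cross3, hcV t ht, hcc t ht]; simp
  have hr1 : ∀ t ∈ Icc (0:ℝ) 1, row3 (r t) 1 =
      Real.cos (θ t) • W t - Real.sin (θ t) • V t := fun t ht => by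
    rw [← SO3_cross (hSO t ht), hr t ht, cross_add3, hcrV t ht, hcrW t ht]; module
  have F0 := (FTCOn.add (FTCOn.smul hθ.cos hV.ftc) (FTCOn.smul hθ.sin hW.ftc)).congr hr
    (ae_of_all _ fun _ => rfl)
  have F1 := (FTCOn.sub (FTCOn.smul hθ.cos hW.ftc) (FTCOn.smul hθ.sin hV.ftc)).congr hr1
    (ae_of_all _ fun _ => rfl)
  refine ⟨![(fun x =>
      (-Real.sin (θ x) * κ x) • V x + Real.cos (θ x) • -(⟪V x, b' x⟫ • row3 (r x) 2) +
        ((Real.cos (θ x) * κ x) • W x + Real.sin (θ x) • -(⟪W x, b' x⟫ • row3 (r x) 2))),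
    (fun x =>
      (-Real.sin (θ x) * κ x) • W x + Real.cos (θ x) • -(⟪W x, b' x⟫ • row3 (r x) 2) -
        ((Real.cos (θ x) * κ x) • V x + Real.sin (θ x) • -(⟪V x, b' x⟫ • row3 (r x) 2))),
    b'], fun i => ?_, ?_⟩
  · fin_cases i
    · exact F0
    · exact F1
    · exact hb
  filter_upwards [ae_mem] with t ht
  simp only [Matrix.cons_val_zero]
  rw [hr1 t ht]
  simp only [inner_add_left, inner_sub_right, inner_smul_left, inner_smul_right, inner_neg_left,
    hVV t ht, hWW t ht, hVW t ht, hcV t ht, hcW t ht, real_inner_comm (V t) (W t)]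
  simp
  linear_combination (κ t) * Real.sin_sq_add_cos_sq (θ t)

/-- For `κ ∈ L¹(I)` and `r ∈ L^∞(I, SO(3))` with `r₃ ∈ W^{1,1}`, the following
are equivalent: (i) `r₁(t) = cos(∫₀ᵗκ) Π_{r₃|_(0,t)} r₁(0) + sin(∫₀ᵗκ) Π_{r₃|_(0,t)} r₂(0)` for
all `t ∈ I`; (ii) `r ∈ W^{1,1}(I, SO(3))` and `r₁'·r₂ = κ` a.e.; (iii) `r ∈ W^{1,1}(I, SO(3))`
and there are `τ, μ ∈ L¹(I)` with `r₁' = κ r₂ + μ r₃`, `r₂' = -κ r₁ + τ r₃`,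
`r₃' = -μ r₁ - τ r₂` a.e. -/
theorem statement4
    (κ : ℝ → ℝ) (hκ : IntegrableOn κ (Set.Ioo 0 1))
    (r : ℝ → Matrix (Fin 3) (Fin 3) ℝ)
    (hSO : ∀ t ∈ Set.Icc (0:ℝ) 1, r t ∈ SO3)
    (b' : ℝ → E3) (hb : FTCOn (fun t => row3 (r t) 2) b' 0 1) :
    -- (i)
    ((∃ V₁ V₂ : ℝ → E3,
        IsParTrans (fun t => row3 (r t) 2) b' 0 1 (row3 (r 0) 0) V₁ ∧
        IsParTrans (fun t => row3 (r t) 2) b' 0 1 (row3 (r 0) 1) V₂ ∧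
        ∀ t ∈ Set.Icc (0:ℝ) 1,
          row3 (r t) 0 = Real.cos (∫ s in (0:ℝ)..t, κ s) • V₁ t
            + Real.sin (∫ s in (0:ℝ)..t, κ s) • V₂ t)
      ↔
    -- (ii)
      (∃ ρ' : Fin 3 → ℝ → E3,
        (∀ i : Fin 3, FTCOn (fun t => row3 (r t) i) (ρ' i) 0 1) ∧
        ∀ᵐ t ∂muI, ⟪ρ' 0 t, row3 (r t) 1⟫ = κ t)) ∧
    -- (ii) ↔ (iii)
    ((∃ ρ' : Fin 3 → ℝ → E3,
        (∀ i : Fin 3, FTCOn (fun t => row3 (r t) i) (ρ' i) 0 1) ∧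
        ∀ᵐ t ∂muI, ⟪ρ' 0 t, row3 (r t) 1⟫ = κ t)
      ↔
      (∃ (ρ' : Fin 3 → ℝ → E3) (τ μ : ℝ → ℝ),
        (∀ i : Fin 3, FTCOn (fun t => row3 (r t) i) (ρ' i) 0 1) ∧
        IntegrableOn τ (Set.Ioo 0 1) ∧ IntegrableOn μ (Set.Ioo 0 1) ∧
        (∀ᵐ t ∂muI,
          ρ' 0 t = κ t • row3 (r t) 1 + μ t • row3 (r t) 2 ∧
          ρ' 1 t = -κ t • row3 (r t) 0 + τ t • row3 (r t) 2 ∧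
          ρ' 2 t = -μ t • row3 (r t) 0 - τ t • row3 (r t) 1))) := by
  have h23 := ii_to_iii κ r hSO
  refine ⟨⟨i_to_ii κ hκ r hSO b' hb, fun h => iii_to_i κ hκ r hSO b' hb (h23 h)⟩, h23, ?_⟩
  rintro ⟨ρ', τ, μ, hF, -, -, hae⟩
  refine ⟨ρ', hF, ?_⟩
  filter_upwards [hae, ae_mem] with t ht htI
  rw [ht.1, inner_add_left, inner_smul_left, inner_smul_left, SO3_inner (hSO t htI),
    SO3_inner (hSO t htI)]
  simp
end
end

section
/- Fix unequal k, ℓ ∈ {1,2,3}. For all r̄ ∈ SO(3) and all γ̄ ∈ ℝ³ with |γ̄| < 1, there exists A ∈ C^∞([0,1], 𝔄) such that the solution r : [0,1] → SO(3) of the linear ODE r' = A r with initial value r(0) = Id satisfies r(1) = r̄ and ∫₀¹ r₁(t) dt = γ̄, where r₁(t) = r(t)ᵀ e₁. -/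
open MeasureTheory Set Filter Matrix
open scoped RealInnerProductSpace Topology ENNReal NNReal

noncomputable section

/-- Membership in the set `𝔄` of skew-symmetric `3×3` matrices whose `(k,ℓ)` entry vanishes. -/
def memFrakA (k l : Fin 3) (A : Matrix (Fin 3) (Fin 3) ℝ) : Prop :=
  Aᵀ = -A ∧ A k l = 0


abbrev M3 : Type := Matrix (Fin 3) (Fin 3) ℝ

lemma convex_mem_of_sep {E : Type*} [NormedAddCommGroup E] [NormedSpace ℝ E]
    [FiniteDimensional ℝ E] {C : Set E} (hC : Convex ℝ C) (x : E) (hne : C.Nonempty)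
    (H : ∀ f : E →L[ℝ] ℝ, f ≠ 0 → ∃ c ∈ C, f x < f c) : x ∈ C := by
  have hint : (interior C).Nonempty := by
    rw [hC.interior_nonempty_iff_affineSpan_eq_top]
    by_contra hS
    obtain ⟨c0, hc0⟩ := hne
    have hdir : (affineSpan ℝ C).direction ≠ ⊤ := by
      intro h
      exact hS ((AffineSubspace.direction_eq_top_iff_of_nonempty
        ⟨c0, subset_affineSpan ℝ C hc0⟩).1 h)
    obtain ⟨f, hf0, hf⟩ := Submodule.exists_le_ker_of_lt_top _ (lt_top_iff_ne_top.2 hdir)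
    have hconst : ∀ c ∈ C, f c = f c0 := by
      intro c hc
      have := hf (AffineSubspace.vsub_mem_direction (subset_affineSpan ℝ C hc)
        (subset_affineSpan ℝ C hc0))
      simp only [vsub_eq_sub, LinearMap.mem_ker, map_sub] at this
      linarith
    have hg0 : LinearMap.toContinuousLinearMap f ≠ 0 := by
      intro h
      apply hf0
      ext y
      have := DFunLike.congr_fun h y
      simpa using this
    obtain ⟨c, hc, h1⟩ := H _ hg0
    obtain ⟨d, hd, h2⟩ := H _ (neg_ne_zero.2 hg0)
    change f x < f c at h1
    change -f x < -f d at h2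
    rw [hconst _ hc] at h1
    rw [hconst _ hd] at h2
    linarith
  by_contra hx
  obtain ⟨f, hf0, hf⟩ := geometric_hahn_banach_of_nonempty_interior_point hC
    (fun h => hx (interior_subset h)) hint
  obtain ⟨c, hc, h⟩ := H f hf0
  have := hf c hc
  linarith

def Xg (i j : Fin 3) : M3 := Matrix.of fun a b =>
  (if a = i ∧ b = j then 1 else 0) - (if a = j ∧ b = i then 1 else 0)

def Eg (i j : Fin 3) (θ : ℝ) : M3 :=
  1 + Real.sin θ • Xg i j + (1 - Real.cos θ) • (Xg i j * Xg i j)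

lemma Xg_transpose (i j : Fin 3) : (Xg i j)ᵀ = - Xg i j := by
  ext a b; simp [Xg, and_comm]

lemma Xg_cube {i j : Fin 3} (h : i ≠ j) : Xg i j * (Xg i j * Xg i j) = - Xg i j := by
  fin_cases i <;> fin_cases j <;> first | exact absurd rfl h | skip
  all_goals
    ext a b
    fin_cases a <;> fin_cases b <;> simp [Xg, Matrix.mul_apply, Fin.sum_univ_three]

lemma Eg_zero (i j : Fin 3) : Eg i j 0 = 1 := by simp [Eg]

lemma Eg_mem {i j : Fin 3} (h : i ≠ j) (θ : ℝ) : Eg i j θ ∈ SO3 := by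
  have h1 := Real.sin_sq_add_cos_sq θ
  constructor
  · fin_cases i <;> fin_cases j <;> first | exact absurd rfl h | skip
    all_goals
      ext a b
      fin_cases a <;> fin_cases b <;>
        simp [Eg, Xg, Matrix.mul_apply, Fin.sum_univ_three, Matrix.one_apply] <;> nlinarith
  · fin_cases i <;> fin_cases j <;> first | exact absurd rfl h | skip
    all_goals
      simp [Eg, Xg, Matrix.mul_apply, Fin.sum_univ_three, Matrix.det_fin_three, Matrix.one_apply]
      nlinarith

lemma Eg_hasDeriv {i j : Fin 3} (h : i ≠ j) (f : ℝ → ℝ) (f' t : ℝ) (hf : HasDerivAt f f' t)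
    (a b : Fin 3) : HasDerivAt (fun s => Eg i j (f s) a b)
      ((f' • (Xg i j * Eg i j (f t))) a b) t := by
  have e : f' • (Xg i j * Eg i j (f t)) = (Real.cos (f t) * f') • Xg i j
      + (Real.sin (f t) * f') • (Xg i j * Xg i j) := by
    simp only [Eg, mul_add, Matrix.mul_smul, Xg_cube h, mul_one]
    module
  rw [e]
  simp only [Eg, Matrix.add_apply, Matrix.smul_apply, smul_eq_mul]
  have h1 := (hf.sin.mul_const (Xg i j a b)).const_add ((1 : M3) a b)
  have h2 := ((hf.cos.const_sub 1).mul_const ((Xg i j * Xg i j) a b))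
  have h3 := (h1.add h2).congr_deriv (show _ = Real.cos (f t) * f' * Xg i j a b +
    Real.sin (f t) * f' * (Xg i j * Xg i j) a b by ring)
  exact h3

lemma SO3_mul {g h : M3} (hg : g ∈ SO3) (hh : h ∈ SO3) : g * h ∈ SO3 := by
  refine ⟨?_, by rw [Matrix.det_mul, hg.2, hh.2, one_mul]⟩
  rw [Matrix.transpose_mul, Matrix.mul_assoc, ← Matrix.mul_assoc h, hh.1, Matrix.one_mul, hg.1]

lemma SO3_trans_mul {g : M3} (hg : g ∈ SO3) : gᵀ * g = 1 :=
  mul_eq_one_comm.1 hg.1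

lemma SO3_trans {g : M3} (hg : g ∈ SO3) : gᵀ ∈ SO3 :=
  ⟨by rw [Matrix.transpose_transpose]; exact SO3_trans_mul hg, by rw [Matrix.det_transpose, hg.2]⟩

lemma SO3_one : (1 : M3) ∈ SO3 := ⟨by simp, by simp⟩

/-- smooth controlled path from `1` to `g`, visiting every element of `S` -/
def PathTo (k l : Fin 3) (S : Set M3) (g : M3) : Prop :=
  ∃ (n : ℝ) (B R : ℝ → M3), 0 ≤ n ∧ (∀ i j, ContDiff ℝ (⊤ : ℕ∞) (fun t => B t i j)) ∧
    (∀ t, memFrakA k l (B t)) ∧ (∀ t ≤ 0, R t = 1) ∧ (∀ t, n ≤ t → R t = g ∧ B t = 0) ∧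
    (∀ t i j, HasDerivAt (fun s => R s i j) ((B t * R t) i j) t) ∧ (∀ t, R t ∈ SO3) ∧
    ∀ s ∈ S, ∃ t ∈ Icc 0 n, R t = s

lemma PathTo.start (k l : Fin 3) : PathTo k l ∅ 1 := by
  refine ⟨0, fun _ => 0, fun _ => 1, le_rfl, fun i j => contDiff_const, fun t => ⟨by simp, by simp⟩,
    fun _ _ => rfl, fun _ _ => ⟨rfl, rfl⟩, fun t i j => ?_, fun _ => SO3_one, by simp⟩
  simpa using hasDerivAt_const t _

lemma PathTo.visit {k l : Fin 3} {S : Set M3} {g : M3} (h : PathTo k l S g) :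
    PathTo k l (insert g S) g := by
  obtain ⟨n, B, R, hn, h1, h2, h3, h4, h5, h6, h7⟩ := h
  refine ⟨n, B, R, hn, h1, h2, h3, h4, h5, h6, ?_⟩
  rintro s (rfl | hs)
  · exact ⟨n, ⟨hn, le_rfl⟩, (h4 n le_rfl).1⟩
  · exact h7 s hs

lemma PathTo.mono {k l : Fin 3} {S T : Set M3} {g : M3} (h : PathTo k l S g) (hT : T ⊆ S) :
    PathTo k l T g := by
  obtain ⟨n, B, R, hn, h1, h2, h3, h4, h5, h6, h7⟩ := h
  exact ⟨n, B, R, hn, h1, h2, h3, h4, h5, h6, fun s hs => h7 s (hT hs)⟩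

lemma PathTo.step {k l : Fin 3} {S : Set M3} {g : M3} (h : PathTo k l S g) {i j : Fin 3}
    (hij : i ≠ j) (hX : Xg i j k l = 0) (θ : ℝ) : PathTo k l S (Eg i j θ * g) := by
  obtain ⟨n, B, R, hn, h1, h2, h3, h4, h5, h6, h7⟩ := h
  set f : ℝ → ℝ := fun t => θ * Real.smoothTransition (t - n) with hf
  have hfs : ContDiff ℝ (⊤ : ℕ∞) f :=
    contDiff_const.mul (Real.smoothTransition.contDiff.comp (contDiff_id.sub contDiff_const))
  have hfd : ∀ t, HasDerivAt f (deriv f t) t := fun t =>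
    (hfs.differentiable (by simp)).differentiableAt.hasDerivAt
  have hf0 : ∀ t ≤ n, f t = 0 := fun t ht => by
    simp [hf, Real.smoothTransition.zero_of_nonpos (show t - n ≤ 0 by linarith)]
  have hf1 : ∀ t, n + 1 ≤ t → f t = θ := fun t ht => by
    simp [hf, Real.smoothTransition.one_of_one_le (show 1 ≤ t - n by linarith)]
  have hfd1 : ∀ t, n + 2 ≤ t → deriv f t = 0 := fun t ht => by
    have : f =ᶠ[𝓝 t] fun _ => θ := by
      filter_upwards [Ioi_mem_nhds (show n + 1 < t by linarith)] with s hs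
      exact hf1 s (le_of_lt hs)
    rw [this.deriv_eq]; simp
  have hds : ContDiff ℝ (⊤ : ℕ∞) (deriv f) :=
    (contDiff_infty_iff_deriv.1 hfs).2
  refine ⟨n + 2, fun t => B t + deriv f t • Xg i j, fun t => Eg i j (f t) * R t, by linarith,
    ?_, ?_, ?_, ?_, ?_, ?_, ?_⟩
  · intro a b
    exact (h1 a b).add (hds.mul contDiff_const)
  · intro t
    refine ⟨?_, ?_⟩
    · rw [Matrix.transpose_add, (h2 t).1, Matrix.transpose_smul, Xg_transpose]
      module
    · simp [(h2 t).2, hX]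
  · intro t ht
    show Eg i j (f t) * R t = 1
    rw [hf0 t (by linarith), Eg_zero, h3 t ht, one_mul]
  · intro t ht
    refine ⟨?_, ?_⟩
    · show Eg i j (f t) * R t = _
      rw [hf1 t (by linarith), (h4 t (by linarith)).1]
    · show B t + deriv f t • Xg i j = 0
      rw [hfd1 t ht, (h4 t (by linarith)).2]; simp
  · intro t a b
    have key : (B t + deriv f t • Xg i j) * (Eg i j (f t) * R t) =
        (deriv f t • (Xg i j * Eg i j (f t))) * R t + Eg i j (f t) * (B t * R t) := by
      rw [add_mul, add_comm, Matrix.smul_mul, Matrix.smul_mul, ← Matrix.mul_assoc]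
      congr 1
      rcases le_total t n with ht | ht
      · rw [hf0 t ht, Eg_zero, one_mul, one_mul]
      · rw [(h4 t ht).2]; simp
    show HasDerivAt (fun s => (Eg i j (f s) * R s) a b)
      (((B t + deriv f t • Xg i j) * (Eg i j (f t) * R t)) a b) t
    rw [key]
    simp only [Matrix.add_apply, Matrix.mul_apply (M := Eg i j _),
      Matrix.mul_apply (N := R _), ← Finset.sum_add_distrib]
    apply HasDerivAt.fun_sum
    intro c _
    have := (Eg_hasDeriv hij f _ t (hfd t) a c).fun_mul (h5 t c b)
    simpa only [Matrix.mul_apply (N := R _)] using this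
  · intro t
    exact SO3_mul (Eg_mem hij _) (h6 t)
  · intro s hs
    obtain ⟨t, ht, e⟩ := h7 s hs
    refine ⟨t, ⟨ht.1, by linarith [ht.2]⟩, ?_⟩
    show Eg i j (f t) * R t = s
    rw [hf0 t ht.2, Eg_zero, one_mul, e]

lemma Eg_conj {i j m : Fin 3} (h1 : i ≠ j) (h2 : m ≠ i) (h3 : m ≠ j) (θ : ℝ) :
    Eg i j θ = Eg j m (Real.pi / 2) * (Eg i m θ * Eg j m (-(Real.pi / 2))) := by
  fin_cases i <;> fin_cases j <;> first | exact absurd rfl h1 | skip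
  all_goals fin_cases m <;> first | exact absurd rfl h2 | exact absurd rfl h3 | skip
  all_goals
    ext a b
    fin_cases a <;> fin_cases b <;>
      simp [Eg, Xg, Matrix.mul_apply, Fin.sum_univ_three, Matrix.one_apply]

lemma PathTo.step_all {k l : Fin 3} {S : Set M3} {g : M3} (h : PathTo k l S g) {i j : Fin 3}
    (hij : i ≠ j) (θ : ℝ) : PathTo k l S (Eg i j θ * g) := by
  by_cases hX : Xg i j k l = 0
  · exact h.step hij hX θ
  · obtain ⟨m, hmi, hmj⟩ : ∃ m : Fin 3, m ≠ i ∧ m ≠ j :=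
      (by decide : ∀ i j : Fin 3, ∃ m : Fin 3, m ≠ i ∧ m ≠ j) i j
    have h1 : Xg j m k l = 0 := by
      simp only [Xg, Matrix.of_apply] at hX ⊢
      grind
    have h2 : Xg i m k l = 0 := by
      simp only [Xg, Matrix.of_apply] at hX ⊢
      grind
    rw [Eg_conj hij hmi hmj, Matrix.mul_assoc, Matrix.mul_assoc]
    exact ((h.step hmj.symm h1 _).step hmi.symm h2 _).step hmj.symm h1 _

lemma polar (a b : ℝ) : ∃ θ : ℝ, a = √(a ^ 2 + b ^ 2) * Real.cos θ ∧
    b = √(a ^ 2 + b ^ 2) * Real.sin θ := by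
  refine ⟨Complex.arg ⟨a, b⟩, ?_⟩
  have h : √(a ^ 2 + b ^ 2) = ‖(⟨a, b⟩ : ℂ)‖ := by
    rw [Complex.norm_def, Complex.normSq_mk]; congr 1; ring
  rw [h, Complex.norm_mul_cos_arg, Complex.norm_mul_sin_arg]
  exact ⟨rfl, rfl⟩

lemma Eg01 (θ : ℝ) : Eg 0 1 θ = !![Real.cos θ, Real.sin θ, 0; -Real.sin θ, Real.cos θ, 0; 0, 0, 1] := by
  ext a b
  fin_cases a <;> fin_cases b <;>
    simp [Eg, Xg, Matrix.mul_apply, Matrix.one_apply]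

lemma Eg02 (θ : ℝ) : Eg 0 2 θ = !![Real.cos θ, 0, Real.sin θ; 0, 1, 0; -Real.sin θ, 0, Real.cos θ] := by
  ext a b
  fin_cases a <;> fin_cases b <;>
    simp [Eg, Xg, Matrix.mul_apply, Matrix.one_apply]

lemma Eg12 (θ : ℝ) : Eg 1 2 θ = !![1, 0, 0; 0, Real.cos θ, Real.sin θ; 0, -Real.sin θ, Real.cos θ] := by
  ext a b
  fin_cases a <;> fin_cases b <;>
    simp [Eg, Xg, Matrix.mul_apply, Matrix.one_apply]

lemma Eg_transpose (i j : Fin 3) (θ : ℝ) : (Eg i j θ)ᵀ = Eg i j (-θ) := by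
  simp [Eg, Xg_transpose]

lemma givens (v : Fin 3 → ℝ) : ∃ α β : ℝ,
    (Eg 0 2 β * Eg 0 1 α) *ᵥ v = ![√(v 0 ^ 2 + v 1 ^ 2 + v 2 ^ 2), 0, 0] := by
  obtain ⟨α, h1, h2⟩ := polar (v 0) (v 1)
  obtain ⟨β, h3, h4⟩ := polar √(v 0 ^ 2 + v 1 ^ 2) (v 2)
  rw [Real.sq_sqrt (by positivity)] at h3 h4
  set r := √(v 0 ^ 2 + v 1 ^ 2)
  set q := √(v 0 ^ 2 + v 1 ^ 2 + v 2 ^ 2)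
  refine ⟨α, β, ?_⟩
  have c1 := Real.sin_sq_add_cos_sq α
  have c2 := Real.sin_sq_add_cos_sq β
  have e1 : Eg 0 1 α *ᵥ v = ![r, 0, v 2] := by
    ext a
    fin_cases a <;> simp [Eg01, Matrix.mulVec, dotProduct, Fin.sum_univ_three]
    · linear_combination Real.cos α * h1 + Real.sin α * h2 + r * c1
    · linear_combination -Real.sin α * h1 + Real.cos α * h2
  rw [← Matrix.mulVec_mulVec, e1]
  ext a
  fin_cases a <;> simp [Eg02, Matrix.mulVec, dotProduct, Fin.sum_univ_three]
  · linear_combination Real.cos β * h3 + Real.sin β * h4 + q * c2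
  · linear_combination -Real.sin β * h3 + Real.cos β * h4

lemma SO3_col {q : M3} (hq : q ∈ SO3) (h0 : q 0 0 = 1) (h1 : q 1 0 = 0) (h2 : q 2 0 = 0) :
    ∃ θ, q = Eg 1 2 θ := by
  have e := hq.1
  have d := hq.2
  have E : ∀ i j, (q * qᵀ) i j = (1 : M3) i j := fun i j => by rw [e]
  have e00 := E 0 0
  have e11 := E 1 1
  have e22 := E 2 2
  simp [Matrix.mul_apply, Fin.sum_univ_three, h0, h1, h2] at e00 e11 e22
  have z1 : q 0 1 = 0 := by nlinarith [sq_nonneg (q 0 1), sq_nonneg (q 0 2)]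
  have z2 : q 0 2 = 0 := by nlinarith [sq_nonneg (q 0 1), sq_nonneg (q 0 2)]
  rw [Matrix.det_fin_three] at d
  simp [h0, h1, h2, z1, z2] at d
  have w : (q 1 1 - q 2 2) ^ 2 + (q 1 2 + q 2 1) ^ 2 = 0 := by nlinarith
  have w1 : q 2 2 = q 1 1 := by nlinarith [sq_nonneg (q 1 1 - q 2 2), sq_nonneg (q 1 2 + q 2 1)]
  have w2 : q 2 1 = - q 1 2 := by nlinarith [sq_nonneg (q 1 1 - q 2 2), sq_nonneg (q 1 2 + q 2 1)]
  obtain ⟨θ, p1, p2⟩ := polar (q 1 1) (q 1 2)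
  rw [show q 1 1 ^ 2 + q 1 2 ^ 2 = 1 by nlinarith] at p1 p2
  simp at p1 p2
  refine ⟨θ, ?_⟩
  rw [Eg12]
  ext a b
  fin_cases a <;> fin_cases b <;> simp [h0, h1, h2, z1, z2, w1, w2, p1, p2]

lemma SO3_decomp {g : M3} (hg : g ∈ SO3) : ∃ α β θ : ℝ,
    g = Eg 0 1 α * (Eg 0 2 β * Eg 1 2 θ) := by
  obtain ⟨α, β, h⟩ := givens (fun i => g i 0)
  have hE : Eg 0 2 β * Eg 0 1 α ∈ SO3 := SO3_mul (Eg_mem (by decide) _) (Eg_mem (by decide) _)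
  have hq := SO3_mul hE hg
  have hn : g 0 0 ^ 2 + g 1 0 ^ 2 + g 2 0 ^ 2 = 1 := by
    have := congrFun (congrFun (SO3_trans_mul hg) 0) 0
    simp [Matrix.mul_apply, Fin.sum_univ_three] at this
    linarith
  have hcol : ∀ i, ((Eg 0 2 β * Eg 0 1 α) * g) i 0 = (![1, 0, 0] : Fin 3 → ℝ) i := by
    intro i
    have := congrFun h i
    simp only [hn, Real.sqrt_one] at this
    exact this
  obtain ⟨θ, hθ⟩ := SO3_col hq (hcol 0) (hcol 1) (hcol 2)
  refine ⟨-α, -β, θ, ?_⟩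
  rw [← hθ, ← Matrix.mul_assoc, ← Eg_transpose, ← Eg_transpose, ← Matrix.transpose_mul,
    ← Matrix.mul_assoc, SO3_trans_mul hE, one_mul]

lemma PathTo.mul {k l : Fin 3} {S : Set M3} {g : M3} (h : PathTo k l S g) {x : M3}
    (hx : x ∈ SO3) : PathTo k l S (x * g) := by
  obtain ⟨α, β, θ, rfl⟩ := SO3_decomp hx
  rw [Matrix.mul_assoc, Matrix.mul_assoc]
  exact ((h.step_all (by decide) _).step_all (by decide) _).step_all (by decide) _

lemma PathTo.move {k l : Fin 3} {S : Set M3} {g : M3} (h : PathTo k l S g) (hg : g ∈ SO3) {x : M3}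
    (hx : x ∈ SO3) : PathTo k l S x := by
  have := h.mul (SO3_mul hx (SO3_trans hg))
  rwa [Matrix.mul_assoc, SO3_trans_mul hg, mul_one] at this

lemma path_exists (k l : Fin 3) {T : Set M3} (hT : T.Finite) (hTS : T ⊆ SO3) {x : M3}
    (hx : x ∈ SO3) : PathTo k l T x := by
  suffices ∃ g ∈ SO3, PathTo k l T g by
    obtain ⟨g, hg, h⟩ := this
    exact h.move hg hx
  induction T, hT using Set.Finite.induction_on with
  | empty => exact ⟨1, SO3_one, PathTo.start k l⟩
  | @insert a s _ _ ih =>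
    obtain ⟨g, hg, h⟩ := ih (fun y hy => hTS (mem_insert_of_mem _ hy))
    have ha := hTS (mem_insert a s)
    exact ⟨a, ha, (h.move hg ha).visit⟩

lemma frame_exists (γ : E3) : ∃ G ∈ SO3, γ = ‖γ‖ • row3 G 0 := by
  obtain ⟨α, β, h⟩ := givens (fun i => γ i)
  have hE : Eg 0 2 β * Eg 0 1 α ∈ SO3 := SO3_mul (Eg_mem (by decide) _) (Eg_mem (by decide) _)
  refine ⟨_, hE, ?_⟩
  set G := Eg 0 2 β * Eg 0 1 α
  have hn : √(γ 0 ^ 2 + γ 1 ^ 2 + γ 2 ^ 2) = ‖γ‖ := by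
    rw [EuclideanSpace.norm_eq]; simp [Fin.sum_univ_three]
  have h2 := congrArg (fun v => Gᵀ *ᵥ v) h
  simp only [Matrix.mulVec_mulVec, SO3_trans_mul hE, Matrix.one_mulVec, hn] at h2
  ext j
  have := congrFun h2 j
  simp only [Matrix.mulVec, dotProduct, Fin.sum_univ_three, Matrix.transpose_apply] at this
  simp at this
  rw [this]
  simp [row3, mul_comm]

lemma rich (γ : E3) (hγ : ‖γ‖ < 1) : ∃ T : Set M3, T.Finite ∧ T ⊆ SO3 ∧
    ∀ f : E3 →L[ℝ] ℝ, f ≠ 0 → ∃ s ∈ T, f γ < f (row3 s 0) := by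
  obtain ⟨G, hG, hγG⟩ := frame_exists γ
  let P : Fin 6 → M3 := ![1, !![-1,0,0;0,-1,0;0,0,1], !![0,1,0;0,0,1;1,0,0],
    !![0,-1,0;0,0,1;-1,0,0], !![0,0,1;1,0,0;0,1,0], !![0,0,-1;1,0,0;0,-1,0]]
  have hP : ∀ i, P i ∈ SO3 := by
    intro i
    constructor
    · ext a b
      fin_cases i <;> fin_cases a <;> fin_cases b <;>
        simp [P, Matrix.mul_apply, Fin.sum_univ_three, Matrix.one_apply]
    · fin_cases i <;> simp [P, Matrix.det_fin_three]
  have rows : ∀ i, row3 (P i * G) 0 = (![row3 G 0, -row3 G 0, row3 G 1, -row3 G 1,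
      row3 G 2, -row3 G 2] : Fin 6 → E3) i := by
    intro i
    ext j
    fin_cases i <;>
      simp [P, row3, Matrix.mul_apply, Matrix.vecMul, dotProduct, Fin.sum_univ_three]
  refine ⟨range (fun i => P i * G), finite_range _, ?_, ?_⟩
  · rintro _ ⟨i, rfl⟩
    exact SO3_mul (hP i) hG
  · intro f hf
    by_contra! hcon
    have H : ∀ i, f (row3 (P i * G) 0) ≤ f γ := fun i => hcon _ ⟨i, rfl⟩
    have hfγ : f γ = ‖γ‖ * f (row3 G 0) := by
      conv_lhs => rw [hγG]
      simp
    have H0 := H 0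
    have H1 := H 1
    have H2 := H 2
    have H3 := H 3
    have H4 := H 4
    have H5 := H 5
    rw [rows, hfγ] at H0 H1 H2 H3 H4 H5
    simp only [Matrix.cons_val, map_neg] at H0 H1 H2 H3 H4 H5
    have hc := norm_nonneg γ
    have u0 : f (row3 G 0) = 0 := by
      rcases lt_trichotomy (f (row3 G 0)) 0 with h | h | h
      · nlinarith
      · exact h
      · nlinarith
    rw [u0, mul_zero] at H2 H3 H4 H5
    have u1 : f (row3 G 1) = 0 := by linarith
    have u2 : f (row3 G 2) = 0 := by linarith
    apply hf
    ext y
    have hy : y = ∑ i, (G *ᵥ (fun j => y j)) i • row3 G i := by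
      ext j
      have h2 : (Gᵀ *ᵥ (G *ᵥ (fun j => y j))) j = y j := by
        rw [Matrix.mulVec_mulVec, SO3_trans_mul hG, Matrix.one_mulVec]
      rw [← h2]
      generalize G *ᵥ (fun j => y j) = v
      simp [Matrix.mulVec, dotProduct, Fin.sum_univ_three, row3, mul_comm]
    rw [hy, map_sum]
    simp [Fin.sum_univ_three, u0, u1, u2]

/-- admissible weights on `[a,b]` -/
def Wt (a b : ℝ) (w : ℝ → ℝ) : Prop :=
  ContDiff ℝ (⊤ : ℕ∞) w ∧ (∃ ε > 0, ∀ s, ε ≤ w s) ∧ ∫ s in a..b, w s = 1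

lemma concentrate {a b t0 c0 : ℝ} (ht : t0 ∈ Ioo a b) {F : ℝ → ℝ} (hF : Continuous F)
    (hc : c0 < F t0) : ∃ w, Wt a b w ∧ c0 < ∫ s in a..b, w s * F s := by
  obtain ⟨m, hm1, hm2⟩ := exists_between hc
  have hab : a < b := ht.1.trans ht.2
  have hU : {s | m < F s} ∩ Ioo a b ∈ 𝓝 t0 :=
    inter_mem ((isOpen_lt continuous_const hF).mem_nhds hm2) (isOpen_Ioo.mem_nhds ht)
  obtain ⟨δ, hδ, hball⟩ := Metric.mem_nhds_iff.1 hU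
  let φ : ContDiffBump t0 := ⟨δ / 2, δ, by linarith, by linarith⟩
  set η := φ.normed volume with hη
  have hsupp : Function.support η = Metric.ball t0 δ := φ.support_normed_eq
  have hηc : Continuous η := φ.continuous_normed
  have hη1 : ∫ s in a..b, η s = 1 := by
    rw [intervalIntegral.integral_eq_integral_of_support_subset]
    · exact φ.integral_normed
    · rw [hsupp]
      intro s hs
      exact Ioo_subset_Ioc_self (hball hs).2
  have hηm : m ≤ ∫ s in a..b, η s * F s := by
    have : ∫ s in a..b, η s * m ≤ ∫ s in a..b, η s * F s := by
      apply intervalIntegral.integral_mono_on hab.le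
      · exact (hηc.mul continuous_const).intervalIntegrable _ _
      · exact (hηc.mul hF).intervalIntegrable _ _
      · intro s _
        by_cases hs : s ∈ Metric.ball t0 δ
        · exact mul_le_mul_of_nonneg_left (le_of_lt (hball hs).1) (φ.nonneg_normed s)
        · rw [← hsupp, Function.notMem_support] at hs
          simp [hs]
    rwa [intervalIntegral.integral_mul_const, hη1, one_mul] at this
  set J := ∫ s in a..b, η s * F s
  set K := ∫ s in a..b, F s
  have hlim : Tendsto (fun ε : ℝ => (1 - ε) * J + ε / (b - a) * K) (𝓝[>] 0) (𝓝 J) := by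
    have : Continuous (fun ε : ℝ => (1 - ε) * J + ε / (b - a) * K) := by fun_prop
    have h := this.tendsto 0
    simp only [sub_zero, one_mul, zero_div, zero_mul, add_zero] at h
    exact h.mono_left nhdsWithin_le_nhds
  have hev := hlim.eventually (lt_mem_nhds (hm1.trans_le hηm))
  have hev2 : ∀ᶠ ε : ℝ in 𝓝[>] 0, ε < 1 :=
    nhdsWithin_le_nhds (Iio_mem_nhds one_pos)
  obtain ⟨ε, h1, h2, h3⟩ := (hev.and (hev2.and self_mem_nhdsWithin)).exists
  have h3 : 0 < ε := h3
  have hba : 0 < b - a := by linarith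
  refine ⟨fun s => (1 - ε) * η s + ε / (b - a), ⟨?_, ⟨ε / (b - a), by positivity, ?_⟩, ?_⟩, ?_⟩
  · exact (contDiff_const.mul φ.contDiff_normed).add contDiff_const
  · intro s
    have : 0 ≤ (1 - ε) * η s := mul_nonneg (by linarith) (φ.nonneg_normed s)
    linarith
  · have i1 : Continuous fun s => (1 - ε) * η s := continuous_const.mul hηc
    rw [intervalIntegral.integral_add (i1.intervalIntegrable _ _)
      (continuous_const.intervalIntegrable _ _), intervalIntegral.integral_const_mul, hη1,
      intervalIntegral.integral_const, smul_eq_mul]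
    field_simp
    ring
  · have e : ∫ s in a..b, ((1 - ε) * η s + ε / (b - a)) * F s =
        (1 - ε) * J + ε / (b - a) * K := by
      rw [← intervalIntegral.integral_const_mul, ← intervalIntegral.integral_const_mul,
        ← intervalIntegral.integral_add]
      · congr 1; ext s; ring
      · exact (continuous_const.mul (hηc.mul hF)).intervalIntegrable _ _
      · exact (continuous_const.mul hF).intervalIntegrable _ _
    rw [e]; exact h1

lemma weight_exists {a b : ℝ} {ρ : ℝ → E3} (hρ : Continuous ρ) (γ : E3)
    (hab : a < b) (H : ∀ f : E3 →L[ℝ] ℝ, f ≠ 0 → ∃ t ∈ Ioo a b, f γ < f (ρ t)) :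
    ∃ w, Wt a b w ∧ ∫ s in a..b, w s • ρ s = γ := by
  let C : Set E3 := {c | ∃ w, Wt a b w ∧ ∫ s in a..b, w s • ρ s = c}
  suffices γ ∈ C from this
  apply convex_mem_of_sep
  · rintro x ⟨w, ⟨hw1, ⟨ε, hε, hw2⟩, hw3⟩, rfl⟩ y ⟨v, ⟨hv1, ⟨δ, hδ, hv2⟩, hv3⟩, rfl⟩ p q hp hq hpq
    refine ⟨fun s => p * w s + q * v s, ⟨?_, ⟨min ε δ, lt_min hε hδ, ?_⟩, ?_⟩, ?_⟩
    · exact (contDiff_const.mul hw1).add (contDiff_const.mul hv1)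
    · intro s
      have h1 := mul_le_mul_of_nonneg_left ((min_le_left ε δ).trans (hw2 s)) hp
      have h2 := mul_le_mul_of_nonneg_left ((min_le_right ε δ).trans (hv2 s)) hq
      calc min ε δ = p * min ε δ + q * min ε δ := by rw [← add_mul, hpq, one_mul]
        _ ≤ _ := add_le_add h1 h2
    · have i1 : Continuous fun s => p * w s := continuous_const.mul hw1.continuous
      have i2 : Continuous fun s => q * v s := continuous_const.mul hv1.continuous
      rw [intervalIntegral.integral_add (i1.intervalIntegrable _ _) (i2.intervalIntegrable _ _),
        intervalIntegral.integral_const_mul, intervalIntegral.integral_const_mul, hw3, hv3]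
      linarith
    · have i1 : Continuous fun s => p • w s • ρ s := (hw1.continuous.smul hρ).const_smul p
      have i2 : Continuous fun s => q • v s • ρ s := (hv1.continuous.smul hρ).const_smul q
      rw [← intervalIntegral.integral_smul, ← intervalIntegral.integral_smul,
        ← intervalIntegral.integral_add
          (i1.intervalIntegrable _ _)
          (i2.intervalIntegrable _ _)]
      congr 1; ext1 s
      module
  · obtain ⟨w, hw, -⟩ := concentrate (F := fun _ => 1) (c0 := 0) (t0 := (a + b) / 2)
      (a := a) (b := b) ⟨by linarith, by linarith⟩ continuous_const one_pos
    exact ⟨_, w, hw, rfl⟩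
  · intro f hf
    obtain ⟨t, ht, hlt⟩ := H f hf
    obtain ⟨w, hw, h⟩ := concentrate ht (f.continuous.comp hρ) hlt
    refine ⟨_, ⟨w, hw, rfl⟩, ?_⟩
    have i1 : Continuous fun s => w s • ρ s := hw.1.continuous.smul hρ
    rw [← ContinuousLinearMap.intervalIntegral_comp_comm f
      (i1.intervalIntegrable _ _)]
    simpa using h

lemma reparam {a b : ℝ} {w : ℝ → ℝ} (hw : Wt a b w) : ∃ φ ψ : ℝ → ℝ,
    ContDiff ℝ (⊤ : ℕ∞) φ ∧ (∀ s, HasDerivAt ψ (w s) s) ∧ (∀ s, φ (ψ s) = s) ∧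
    (∀ t, HasDerivAt φ (w (φ t))⁻¹ t) ∧ ψ a = 0 ∧ ψ b = 1 := by
  obtain ⟨hw1, ⟨ε, hε, hw2⟩, hw3⟩ := hw
  let ψ : ℝ → ℝ := fun s => ∫ x in a..s, w x
  have hd : ∀ s, HasDerivAt ψ (w s) s := fun s =>
    intervalIntegral.integral_hasDerivAt_right (hw1.continuous.intervalIntegrable _ _)
      (hw1.continuous.stronglyMeasurableAtFilter _ _) hw1.continuous.continuousAt
  have hwpos : ∀ s, 0 < w s := fun s => hε.trans_le (hw2 s)
  have hcont : Continuous ψ := continuous_iff_continuousAt.2 fun s => (hd s).continuousAt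
  have hmono : StrictMono ψ := strictMono_of_hasDerivAt_pos hd hwpos
  have hψa : ψ a = 0 := by simp [ψ]
  have hlow : Monotone (fun s => ψ s - ε * s) := by
    apply monotone_of_hasDerivAt_nonneg (f' := fun s => w s - ε * 1)
    · intro s
      exact (hd s).sub ((hasDerivAt_id s).const_mul ε)
    · intro s
      have := hw2 s
      simp; linarith
  have hsurj : Function.Surjective ψ := by
    apply hcont.surjective
    · have h1 : Tendsto (fun s : ℝ => ε * s + (ψ 0)) atTop atTop :=
        tendsto_atTop_add_const_right _ _ (tendsto_id.const_mul_atTop hε)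
      refine tendsto_atTop_mono' _ ?_ h1
      filter_upwards [eventually_ge_atTop 0] with s hs
      have := hlow hs
      simp at this; linarith
    · have h1 : Tendsto (fun s : ℝ => ε * s + (ψ 0)) atBot atBot :=
        tendsto_atBot_add_const_right _ _ (tendsto_id.const_mul_atBot hε)
      refine tendsto_atBot_mono' _ ?_ h1
      filter_upwards [eventually_le_atBot 0] with s hs
      have := hlow hs
      simp at this; linarith
  let h : ℝ ≃ₜ ℝ := (hmono.orderIsoOfSurjective ψ hsurj).toHomeomorph
  have hh : ∀ s, h s = ψ s := fun s => rfl
  have hψs : ContDiff ℝ (⊤ : ℕ∞) ψ := by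
    rw [contDiff_infty_iff_deriv]
    refine ⟨fun s => (hd s).differentiableAt, ?_⟩
    rwa [show deriv ψ = w from funext fun s => (hd s).deriv]
  refine ⟨h.symm, ψ, ?_, hd, ?_, ?_, hψa, hw3⟩
  · exact h.contDiff_symm_deriv (f' := w) (fun s => (hwpos s).ne') hd hψs
  · intro s
    rw [← hh, h.symm_apply_apply]
  · intro t
    exact HasDerivAt.of_local_left_inverse h.symm.continuous.continuousAt (hd _)
      (hwpos _).ne' (Eventually.of_forall fun y => h.apply_symm_apply y)

lemma row3_hasDeriv {R : ℝ → M3} {D : M3} {t : ℝ}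
    (h : ∀ i j, HasDerivAt (fun s => R s i j) (D i j) t) (i : Fin 3) :
    HasDerivAt (fun s => row3 (R s) i) (row3 D i) t := by
  have h1 : HasDerivAt (fun s => R s i) (D i) t := hasDerivAt_pi.2 (h i)
  exact ((PiLp.continuousLinearEquiv 2 ℝ (fun _ : Fin 3 => ℝ)).symm.toContinuousLinearMap.hasFDerivAt
    (x := R t i)).comp_hasDerivAt t h1

/-- Accessibility of all clamped boundary conditions: for unequal `k, ℓ`, any
`r̄ ∈ SO(3)` and any `γ̄` with `|γ̄| < 1`, there is `A ∈ C^∞([0,1], 𝔄)` such that the solution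
of `r' = A r`, `r(0) = Id`, satisfies `r(1) = r̄` and `∫₀¹ r₁ = γ̄`. -/
theorem statement7 (k l : Fin 3) (hkl : k ≠ l)
    (rbar : Matrix (Fin 3) (Fin 3) ℝ) (hrbar : rbar ∈ SO3)
    (γbar : E3) (hγ : ‖γbar‖ < 1) :
    ∃ A r : ℝ → Matrix (Fin 3) (Fin 3) ℝ,
      (∀ i j : Fin 3, ContDiff ℝ (⊤ : ℕ∞) (fun t => A t i j)) ∧
      (∀ t ∈ Set.Icc (0:ℝ) 1, memFrakA k l (A t)) ∧
      r 0 = 1 ∧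
      (∀ t ∈ Set.Icc (0:ℝ) 1, ∀ i : Fin 3,
        HasDerivAt (fun s => row3 (r s) i) (row3 (A t * r t) i) t) ∧
      (∀ t ∈ Set.Icc (0:ℝ) 1, r t ∈ SO3) ∧
      r 1 = rbar ∧ (∫ t in (0:ℝ)..1, row3 (r t) 0) = γbar := by
  obtain ⟨T, hTf, hTS, hT⟩ := rich γbar hγ
  obtain ⟨n, B, R, hn, h1, h2, h3, h4, h5, h6, h7⟩ := path_exists k l hTf hTS hrbar
  have hρ : Continuous (fun s => row3 (R s) 0) :=
    continuous_iff_continuousAt.2 fun t => (row3_hasDeriv (h5 t) 0).continuousAt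
  obtain ⟨w, hw, hwγ⟩ := weight_exists (a := -1) (b := n + 1) hρ γbar (by linarith) (by
    intro f hf
    obtain ⟨s, hs, hlt⟩ := hT f hf
    obtain ⟨t, ht, rfl⟩ := h7 s hs
    exact ⟨t, ⟨by linarith [ht.1], by linarith [ht.2]⟩, hlt⟩)
  obtain ⟨φ, ψ, hφs, hψd, hφψ, hφd, hψa, hψb⟩ := reparam hw
  have hwpos : ∀ s, w s ≠ 0 := fun s => by
    obtain ⟨ε, hε, h⟩ := hw.2.1
    exact (hε.trans_le (h s)).ne'
  have hφ0 : φ 0 = -1 := by rw [← hψa, hφψ]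
  have hφ1 : φ 1 = n + 1 := by have := hφψ (n + 1); rwa [hψb] at this
  refine ⟨fun t => (w (φ t))⁻¹ • B (φ t), fun t => R (φ t), ?_, ?_, ?_, ?_, ?_, ?_, ?_⟩
  · intro i j
    exact ((hw.1.comp hφs).inv (fun t => hwpos _)).mul ((h1 i j).comp hφs)
  · intro t _
    refine ⟨?_, ?_⟩
    · show ((w (φ t))⁻¹ • B (φ t))ᵀ = -((w (φ t))⁻¹ • B (φ t))
      rw [Matrix.transpose_smul, (h2 _).1, smul_neg]
    · simp [(h2 (φ t)).2]
  · show R (φ 0) = 1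
    rw [hφ0]; exact h3 _ (by norm_num)
  · intro t _ i
    apply row3_hasDeriv (R := fun s => R (φ s))
    intro i j
    have := (h5 (φ t) i j).comp t (hφd t)
    refine this.congr_deriv ?_
    simp [Matrix.smul_mul, mul_comm]
  · intro t _
    exact h6 _
  · show R (φ 1) = rbar
    rw [hφ1]; exact (h4 _ (by linarith)).1
  · have hsub := intervalIntegral.integral_comp_smul_deriv (a := -1) (b := n + 1) (f := ψ)
      (f' := w) (g := fun t => row3 (R (φ t)) 0) (fun s _ => hψd s) hw.1.continuous.continuousOn
      (hρ.comp hφs.continuous)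
    rw [hψa, hψb] at hsub
    rw [← hsub, ← hwγ]
    simp only [Function.comp_def, hφψ]
end
end
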